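/- arXiv:math/9301208 — 3 statements merged into one kernel-verified Lean document; each statement's English description precedes it below -/
import Mathlib

section
/- Let A, B ⊆ C be amenable. Then the partial order 𝒫(A,B) satisfies the countable chain condition: every set of pairwise incompatible conditions is countable. -/
/-- `D_η = {σ : ℕ → ℚ | ∀ n, σ (2n) = η n}`. -/
def Dset (η : ℕ → ℚ) : Set (ℕ → ℚ) := {σ | ∀ n, σ (2 * n) = η n}

/-- `S_η`: elements of `D_η` with `σ (2n+1) = 0` for all but finitely many `n`. -/
def Sset (η : ℕ → ℚ) : Set (ℕ → ℚ) :=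
  {σ | σ ∈ Dset η ∧ {n | σ (2 * n + 1) ≠ 0}.Finite}

/-- `C = ⋃_η S_η`. -/
def Cset : Set (ℕ → ℚ) := ⋃ η : ℕ → ℚ, Sset η

/-- The lexicographic (strict) order on `ℕ → ℚ`: `σ < τ` iff they first differ at
some index `k` and `σ k < τ k` there. -/
def lexLt (σ τ : ℕ → ℚ) : Prop := ∃ k, (∀ j < k, σ j = τ j) ∧ σ k < τ k

/-- A set `A ⊆ C` is amenable if whenever some element of `S_η` agrees with a finite
sequence `s` on all indices below `n`, some element of `A ∩ S_η` does as well. -/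
def Amenable (A : Set (ℕ → ℚ)) : Prop :=
  ∀ (η : ℕ → ℚ) (n : ℕ) (s : Fin n → ℚ),
    (∃ ν ∈ Sset η, ∀ k : Fin n, ν k = s k) →
    ∃ ν ∈ A ∩ Sset η, ∀ k : Fin n, ν k = s k

/-- A condition in the forcing `𝒫(A,B)`: a finite partial injection from `A` to `B`
(given by its graph) preserving the lexicographic order and each predicate `S_η`. -/
structure Cond (A B : Set (ℕ → ℚ)) where
  graph : Set ((ℕ → ℚ) × (ℕ → ℚ))
  finite : graph.Finite
  dom_sub : ∀ ⦃x y⦄, (x, y) ∈ graph → x ∈ A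
  ran_sub : ∀ ⦃x y⦄, (x, y) ∈ graph → y ∈ B
  functional : ∀ ⦃x y y'⦄, (x, y) ∈ graph → (x, y') ∈ graph → y = y'
  injective : ∀ ⦃x x' y⦄, (x, y) ∈ graph → (x', y) ∈ graph → x = x'
  ord : ∀ ⦃x y x' y'⦄, (x, y) ∈ graph → (x', y') ∈ graph → (lexLt x x' ↔ lexLt y y')
  pres : ∀ ⦃x y⦄ (η : ℕ → ℚ), (x, y) ∈ graph → (x ∈ Sset η ↔ y ∈ Sset η)

/-- Two conditions are compatible if some condition extends both. -/
def Compatible {A B : Set (ℕ → ℚ)} (p q : Cond A B) : Prop :=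
  ∃ r : Cond A B, p.graph ⊆ r.graph ∧ q.graph ⊆ r.graph

/-!
Two points of a common `S_η` agree from some index on, so every condition `p` has a level `N` from
which on each `x` in its domain agrees with `p x`, and below which distinct points of the domain,
and of the range, already differ. There are only countably many possible pairs of such a level
and the restriction of `p` below it, so it suffices to see that conditions `p` and `q` with the
same level and restriction are compatible. Let `x` and `x'` be in the domains of `p` and `q`. If
`(x, p x)` and `(x', q x')` agree below `N`, the comparisons of `x` with `x'` and of `p x` with
`q x'` are decided from `N` on, where `p x` agrees with `x` and `q x'` with `x'`. Otherwise they
are decided below `N`, where `(x', q x')` agrees with a pair of `p`, and `p` preserves the order.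
-/

open Filter Set

section LexComparison

variable {ι α : Type*} {x x' y y' : ι → α}

theorem toLex_lt_toLex_iff_of_cmp_eq [LT ι] [LinearOrder α]
    (h : ∀ k, cmp (x k) (y k) = cmp (x' k) (y' k)) :
    toLex x < toLex y ↔ toLex x' < toLex y' :=
  exists_congr fun k => and_congr
    (forall₂_congr fun j _ => eq_iff_eq_of_cmp_eq_cmp (h j)) (lt_iff_lt_of_cmp_eq_cmp (h k))

variable [LinearOrder ι] [LT α]

theorem toLex_lt_toLex_of_eqOn {s : Set ι} (hs : IsLowerSet s) (hx : EqOn x x' s)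
    (hy : EqOn y y' s) (hxy : ¬ EqOn x y s) (hlt : toLex x < toLex y) :
    toLex x' < toLex y' := by
  obtain ⟨k, hbelow, hk⟩ := hlt
  have hks : k ∈ s := by
    by_contra hks
    exact hxy fun j hj => hbelow j (lt_of_not_ge fun hkj => hks (hs hkj hj))
  refine ⟨k, fun j hj => ?_, ?_⟩
  · exact (hx (hs hj.le hks)).symm.trans ((hbelow j hj).trans (hy (hs hj.le hks)))
  · change x' k < y' k
    rw [← hx hks, ← hy hks]
    exact hk

theorem toLex_lt_toLex_iff_of_eqOn {s : Set ι} (hs : IsLowerSet s) (hx : EqOn x x' s)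
    (hy : EqOn y y' s) (hxy : ¬ EqOn x y s) : toLex x < toLex y ↔ toLex x' < toLex y' := by
  refine ⟨toLex_lt_toLex_of_eqOn hs hx hy hxy, toLex_lt_toLex_of_eqOn hs hx.symm hy.symm ?_⟩
  exact fun hxy' => hxy (hx.trans (hxy'.trans hy.symm))

end LexComparison

section Truncation

variable {ι α : Type*} [Preorder ι]

/-- The pair of restrictions of two functions to the indices below `N`. -/
def truncate (N : ι) (u : (ι → α) × (ι → α)) : (Iio N → α) × (Iio N → α) :=
  ((Iio N).domRestrict u.1, (Iio N).domRestrict u.2)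

theorem truncate_eq_truncate_iff {N : ι} {u v : (ι → α) × (ι → α)} :
    truncate N u = truncate N v ↔ EqOn u.1 v.1 (Iio N) ∧ EqOn u.2 v.2 (Iio N) := by
  simp only [truncate, Prod.mk.injEq, domRestrict_eq_domRestrict_iff]

/-- The level `N` resolves the graph `G`: truncated below `N`, each point of the domain and each
point of the range still determines its pair in `G`, and each pair of `G` agrees from `N` on. -/
structure Resolves (N : ι) (G : Set ((ι → α) × (ι → α))) : Prop where
  injOn_fst : InjOn (Prod.fst ∘ truncate N) G
  injOn_snd : InjOn (Prod.snd ∘ truncate N) G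
  eqOn_Ici : ∀ u ∈ G, EqOn u.1 u.2 (Ici N)

/-- The relation with graph `G` preserves and reflects the strict lexicographic order; when this
order is linear, `G` is then the graph of a partial injection. -/
def LexPreserving [LT α] (G : Set ((ι → α) × (ι → α))) : Prop :=
  ∀ u ∈ G, ∀ v ∈ G, toLex u.1 < toLex v.1 ↔ toLex u.2 < toLex v.2

theorem eventually_injOn_domRestrict_Iio [NoMaxOrder ι] {β : Type*} {G : Set β} {f : β → ι → α}
    (hG : G.Finite) (hf : InjOn f G) :
    ∀ᶠ N in atTop, InjOn (fun u => (Iio N).domRestrict (f u)) G := by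
  simp only [InjOn, domRestrict_eq_domRestrict_iff]
  refine (eventually_all_finite hG).2 fun u hu => (eventually_all_finite hG).2 fun v hv => ?_
  by_cases huv : f u = f v
  · exact .of_forall fun _ _ => hf hu hv huv
  · obtain ⟨k, hk⟩ := Function.ne_iff.1 huv
    filter_upwards [eventually_gt_atTop k] with N hN hEq
    exact absurd (hEq hN) hk

end Truncation

namespace LexPreserving

variable {ι α : Type*} [LinearOrder ι] [LinearOrder α] {G H : Set ((ι → α) × (ι → α))}
  {u v w : (ι → α) × (ι → α)} {N : ι}

theorem lt_iff_lt_of_truncate_eq (hG : LexPreserving G) (hN : Resolves N G) (hu : u ∈ G)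
    (hw : w ∈ G) (hwv : truncate N w = truncate N v) (hv : EqOn v.1 v.2 (Ici N)) :
    toLex u.1 < toLex v.1 ↔ toLex u.2 < toLex v.2 := by
  obtain ⟨hfst, hsnd⟩ := truncate_eq_truncate_iff.1 hwv
  by_cases huw : u = w
  · subst huw
    refine toLex_lt_toLex_iff_of_cmp_eq fun k => ?_
    rcases lt_or_ge k N with hk | hk
    · rw [hfst hk, hsnd hk, cmp_self_eq_eq, cmp_self_eq_eq]
    · rw [hN.eqOn_Ici u hu hk, hv hk]
  · have hne_fst : ¬ EqOn u.1 w.1 (Iio N) := fun h =>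
      huw (hN.injOn_fst hu hw (domRestrict_eq_domRestrict_iff.2 h))
    have hne_snd : ¬ EqOn u.2 w.2 (Iio N) := fun h =>
      huw (hN.injOn_snd hu hw (domRestrict_eq_domRestrict_iff.2 h))
    calc toLex u.1 < toLex v.1
        ↔ toLex u.1 < toLex w.1 :=
          (toLex_lt_toLex_iff_of_eqOn (isLowerSet_Iio N) (eqOn_refl _ _) hfst hne_fst).symm
      _ ↔ toLex u.2 < toLex w.2 := hG u hu w hw
      _ ↔ toLex u.2 < toLex v.2 :=
          toLex_lt_toLex_iff_of_eqOn (isLowerSet_Iio N) (eqOn_refl _ _) hsnd hne_snd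

theorem union (hG : LexPreserving G) (hH : LexPreserving H) (hNG : Resolves N G)
    (hNH : Resolves N H) (h : truncate N '' G = truncate N '' H) : LexPreserving (G ∪ H) := by
  rintro u (hu | hu) v (hv | hv)
  · exact hG u hu v hv
  · obtain ⟨w, hw, hwv⟩ := h.superset (mem_image_of_mem _ hv)
    exact hG.lt_iff_lt_of_truncate_eq hNG hu hw hwv (hNH.eqOn_Ici v hv)
  · obtain ⟨w, hw, hwv⟩ := h.subset (mem_image_of_mem _ hv)
    exact hH.lt_iff_lt_of_truncate_eq hNH hu hw hwv (hNG.eqOn_Ici v hv)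
  · exact hH u hu v hv

variable [WellFoundedLT ι]

theorem fst_eq_fst_iff (hG : LexPreserving G) (hu : u ∈ G) (hv : v ∈ G) :
    u.1 = v.1 ↔ u.2 = v.2 := by
  rw [← toLex_inj, ← toLex_inj (a := u.2), le_antisymm_iff, le_antisymm_iff (a := toLex u.2)]
  simp only [← not_lt]
  exact and_congr (not_congr (hG v hv u hu)) (not_congr (hG u hu v hv))

theorem injOn_fst (hG : LexPreserving G) : InjOn Prod.fst G :=
  fun _ hu _ hv h => Prod.ext h ((hG.fst_eq_fst_iff hu hv).1 h)

theorem injOn_snd (hG : LexPreserving G) : InjOn Prod.snd G :=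
  fun _ hu _ hv h => Prod.ext ((hG.fst_eq_fst_iff hu hv).2 h) h

theorem exists_resolves [NoMaxOrder ι] [Nonempty ι] (hG : LexPreserving G) (hfin : G.Finite)
    (hEq : ∀ u ∈ G, u.1 =ᶠ[atTop] u.2) : ∃ N, Resolves N G := by
  have hIci : ∀ᶠ N in atTop, ∀ u ∈ G, EqOn u.1 u.2 (Ici N) :=
    (eventually_all_finite hfin).2 fun u hu => eventually_forall_ge_atTop.2 (hEq u hu)
  obtain ⟨N, hfst, hsnd, hN⟩ := ((eventually_injOn_domRestrict_Iio hfin hG.injOn_fst).and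
    ((eventually_injOn_domRestrict_Iio hfin hG.injOn_snd).and hIci)).exists
  exact ⟨N, hfst, hsnd, hN⟩

end LexPreserving

theorem eventuallyEq_of_mem_Sset {η x y : ℕ → ℚ} (hx : x ∈ Sset η) (hy : y ∈ Sset η) :
    x =ᶠ[atTop] y := by
  rw [← Nat.cofinite_eq_atTop]
  refine ((hx.2.union hy.2).image (2 * · + 1)).subset fun k hk => ?_
  obtain ⟨n, rfl | rfl⟩ := k.even_or_odd'
  · exact absurd ((hx.1 n).trans (hy.1 n).symm) hk
  · refine ⟨n, ?_, rfl⟩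
    by_contra! hn
    simp only [mem_union, mem_ofPred_eq, not_or, not_not] at hn
    exact hk (hn.1.trans hn.2.symm)

namespace Cond

variable {A B : Set (ℕ → ℚ)}

theorem lexPreserving (p : Cond A B) : LexPreserving p.graph :=
  fun _ hu _ hv => p.ord hu hv

theorem eventuallyEq (hAC : A ⊆ Cset) (p : Cond A B) {x y : ℕ → ℚ} (h : (x, y) ∈ p.graph) :
    x =ᶠ[atTop] y := by
  obtain ⟨η, hη⟩ := mem_iUnion.1 (hAC (p.dom_sub h))
  exact eventuallyEq_of_mem_Sset hη ((p.pres η h).1 hη)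

theorem exists_resolves (hAC : A ⊆ Cset) (p : Cond A B) : ∃ N, Resolves N p.graph :=
  p.lexPreserving.exists_resolves p.finite fun _ hu => p.eventuallyEq hAC hu

theorem compatible_of_lexPreserving_union {p q : Cond A B}
    (h : LexPreserving (p.graph ∪ q.graph)) : Compatible p q :=
  ⟨{ graph := p.graph ∪ q.graph
     finite := p.finite.union q.finite
     dom_sub := fun _ _ h => h.elim (p.dom_sub ·) (q.dom_sub ·)
     ran_sub := fun _ _ h => h.elim (p.ran_sub ·) (q.ran_sub ·)
     functional := fun _ _ _ hu hv => (h.fst_eq_fst_iff hu hv).1 rfl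
     injective := fun _ _ _ hu hv => (h.fst_eq_fst_iff hu hv).2 rfl
     ord := fun _ _ _ _ hu hv => h _ hu _ hv
     pres := fun _ _ η h => h.elim (p.pres η ·) (q.pres η ·) },
    subset_union_left, subset_union_right⟩

theorem compatible_of_truncate_eq {p q : Cond A B} {N : ℕ} (hp : Resolves N p.graph)
    (hq : Resolves N q.graph) (h : truncate N '' p.graph = truncate N '' q.graph) :
    Compatible p q :=
  compatible_of_lexPreserving_union (p.lexPreserving.union q.lexPreserving hp hq h)

end Cond

theorem cond_ccc_general (A B : Set (ℕ → ℚ)) (hAC : A ⊆ Cset) (S : Set (Cond A B))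
    (hS : ∀ p ∈ S, ∀ q ∈ S, p ≠ q → ¬ Compatible p q) : S.Countable := by
  have hcover : S ⊆ ⋃ N : ℕ, {p ∈ S | Resolves N p.graph} := fun p hp =>
    mem_iUnion.2 ((p.exists_resolves hAC).imp fun _ hN => ⟨hp, hN⟩)
  refine (countable_iUnion fun N => ?_).mono hcover
  have hmaps : MapsTo (fun p : Cond A B => truncate N '' p.graph)
      {p ∈ S | Resolves N p.graph} {s | s.Finite} := fun p _ => p.finite.image _
  refine hmaps.countable_of_injOn ?_ Countable.ofPred_finite
  rintro p ⟨hpS, hpN⟩ q ⟨hqS, hqN⟩ hpq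
  by_contra hne
  exact hS p hpS q hqS hne (Cond.compatible_of_truncate_eq hpN hqN hpq)

/-- For amenable `A, B ⊆ C`, the forcing `𝒫(A,B)` satisfies the countable chain
condition: every set of pairwise incompatible conditions is countable. -/
theorem cond_ccc (A B : Set (ℕ → ℚ)) (hAC : A ⊆ Cset) (hBC : B ⊆ Cset)
    (hA : Amenable A) (hB : Amenable B) :
    ∀ S : Set (Cond A B),
      (∀ p ∈ S, ∀ q ∈ S, p ≠ q → ¬ Compatible p q) → S.Countable :=
  cond_ccc_general A B hAC
end

section
/- There exists a subset M₀ ⊆ C such that (1) for every η : ℕ → Bool the set S_η \ M₀ has at most one element (hence M₀ is amenable), and (2) M₀ is rigid: every E-preserving bijection from M₀ onto M₀ is the identity. -/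
/-- `D_η = {σ : ℕ → Bool | ∀ n, σ (2n) = η n}` in Cantor space. -/
def DsetB (η : ℕ → Bool) : Set (ℕ → Bool) := {σ | ∀ n, σ (2 * n) = η n}

/-- `b_η` is the element of `D_η` with `b_η (2n) = η n` and `b_η (2n+1) = 1`. -/
def bfun (η : ℕ → Bool) : ℕ → Bool := fun n => if n % 2 = 0 then η (n / 2) else true

/-- `S_η`: elements of `D_η` with `σ (2n+1) = 0` for all but finitely many `n`,
together with the extra point `b_η`. -/
def SsetB (η : ℕ → Bool) : Set (ℕ → Bool) :=
  {σ | σ ∈ DsetB η ∧ {n | σ (2 * n + 1) ≠ false}.Finite} ∪ {bfun η}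

/-- `C = ⋃_η S_η`. -/
def CsetB : Set (ℕ → Bool) := ⋃ η : ℕ → Bool, SsetB η

/-- `E_i (σ, τ)` holds iff `σ` and `τ` agree below `i`. -/
def Erel (i : ℕ) (σ τ : ℕ → Bool) : Prop := ∀ k < i, σ k = τ k

/-- A set `M ⊆ C` is amenable if whenever some element of `S_η` agrees with a finite
sequence `s` on all indices below `n`, some element of `M ∩ S_η` does as well. -/
def AmenableB (M : Set (ℕ → Bool)) : Prop :=
  ∀ (η : ℕ → Bool) (n : ℕ) (s : Fin n → Bool),
    (∃ ν ∈ SsetB η, ∀ k : Fin n, ν k = s k) →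
    ∃ ν ∈ M ∩ SsetB η, ∀ k : Fin n, ν k = s k

/-!
An `E`-preserving self-map of a dense set extends to an `E`-preserving map of Cantor space. Such
maps are continuous and injective, so there are at most `𝔠` of them, and each one other than the
identity moves a whole cylinder, hence `𝔠` points of `C`. By transfinite recursion of length `𝔠`
choose for each such map `g` a moved point `x_g ∈ C`, and remove all the points `g x_g` from `C`:
then `g` does not map the remaining set into itself, as long as no `x_g` is removed. The choices
can be made so that, moreover, no two of the removed points lie in the same `S_η`, because each
earlier choice rules out only countably many later ones.
-/

open Cardinal Set

universe u v

theorem exists_mem_forall_notMem_of_countable {I X : Type u} {κ : Cardinal.{u}} (hκ : ℵ₀ < κ)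
    (hI : #I < κ) {A : Set X} (hA : κ ≤ #A) {B : I → Set X} (hB : ∀ i, (B i).Countable) :
    ∃ x ∈ A, ∀ i, x ∉ B i := by
  have union_lt : #(⋃ i, B i) < κ :=
    calc #(⋃ i, B i) ≤ #I * ⨆ i, #(B i) := mk_iUnion_le B
      _ ≤ #I * ℵ₀ := by gcongr; exact ciSup_le' fun i => (hB i).le_aleph0
      _ < κ := mul_lt_of_lt hκ.le hI hκ
  obtain ⟨x, hxA, hxB⟩ := not_subset.1 fun h : A ⊆ ⋃ i, B i =>
    (hA.trans (mk_le_mk_of_subset h)).not_gt union_lt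
  exact ⟨x, hxA, fun i hi => hxB (mem_iUnion_of_mem i hi)⟩

theorem exists_pairwise_not_of_countable {T X : Type u} {κ : Cardinal.{u}} (hκ : ℵ₀ < κ)
    (hT : #T ≤ κ) {A : T → Set X} (hA : ∀ t, κ ≤ #(A t)) {R : T → T → X → X → Prop}
    (hsymm : ∀ s t x y, R s t x y → R t s y x) (hR : ∀ s t x, {y | R s t x y}.Countable) :
    ∃ x : T → X, (∀ t, x t ∈ A t) ∧ Pairwise fun s t => ¬ R s t (x s) (x t) := by
  obtain ⟨r, _, hr⟩ := Cardinal.exists_ord_eq T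
  have initial_lt (t : T) : #{s // r s t} < κ := by
    have h := Ordinal.typein_lt_type r t
    rw [← hr, lt_ord, Ordinal.card_typein] at h
    exact h.trans_le hT
  have step (t : T) (p : ∀ s, r s t → X) : ∃ x ∈ A t, ∀ s (h : r s t), ¬ R s t (p s h) x := by
    obtain ⟨x, hxA, hx⟩ := exists_mem_forall_notMem_of_countable hκ (initial_lt t) (hA t)
      fun s : {s // r s t} => hR s t (p s s.2)
    exact ⟨x, hxA, fun s h => hx ⟨s, h⟩⟩
  choose next next_mem next_not using step
  let x : T → X := (IsWellFounded.wf (r := r)).fix next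
  have x_eq (t : T) : x t = next t fun s _ => x s := IsWellFounded.wf.fix_eq next t
  have not_of_lt {s t : T} (h : r s t) : ¬ R s t (x s) (x t) := by
    rw [x_eq t]
    exact next_not t (fun s _ => x s) s h
  refine ⟨x, fun t => x_eq t ▸ next_mem t _, fun s t hne => ?_⟩
  rcases trichotomous_of r s t with h | h | h
  · exact not_of_lt h
  · exact absurd h hne
  · exact fun hst => not_of_lt h (hsymm s t _ _ hst)

theorem countable_setOf_exists_mem_mem {ι X : Type*} {S : ι → Set X}
    (hdisj : Pairwise (Function.onFun Disjoint S)) (hcount : ∀ i, (S i).Countable) (x : X) :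
    {y | ∃ i, x ∈ S i ∧ y ∈ S i}.Countable := by
  by_cases hx : ∃ i, x ∈ S i
  · obtain ⟨i, hi⟩ := hx
    refine (hcount i).mono fun y ⟨j, hj, hy⟩ => ?_
    rwa [hdisj.eq (not_disjoint_iff.2 ⟨x, hi, hj⟩)]
  · exact countable_empty.mono fun y ⟨i, hi, _⟩ => hx ⟨i, hi⟩

theorem exists_diff_subsingleton_forall_not_mapsTo {ι : Type*} {T X : Type u} {κ : Cardinal.{u}}
    (hκ : ℵ₀ < κ) {S : ι → Set X} (hdisj : Pairwise (Function.onFun Disjoint S))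
    (hcount : ∀ i, (S i).Countable) (hT : #T ≤ κ) {g : T → X → X}
    (hinj : ∀ t, (g t).Injective) (hmoved : ∀ t, κ ≤ #{x | x ∈ ⋃ i, S i ∧ g t x ≠ x}) :
    ∃ M ⊆ ⋃ i, S i, (∀ i, (S i \ M).Subsingleton) ∧ ∀ t, ¬ MapsTo (g t) M M := by
  let Conflict (s t : T) (x y : X) : Prop :=
    y = g s x ∨ x = g t y ∨ ∃ i, g s x ∈ S i ∧ g t y ∈ S i
  have conflict_symm (s t : T) (x y : X) : Conflict s t x y → Conflict t s y x := by
    rintro (h | h | ⟨i, hx, hy⟩)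
    exacts [.inr (.inl h), .inl h, .inr (.inr ⟨i, hy, hx⟩)]
  have conflict_countable (s t : T) (x : X) : {y | Conflict s t x y}.Countable :=
    (countable_singleton (g s x)).union <|
      (((countable_singleton x).preimage_of_injOn (hinj t).injOn).mono fun _ h => h.symm).union <|
        (countable_setOf_exists_mem_mem hdisj hcount (g s x)).preimage_of_injOn (hinj t).injOn
  obtain ⟨x, hx, hpair⟩ :=
    exists_pairwise_not_of_countable hκ hT hmoved conflict_symm conflict_countable
  have x_ne (s t : T) : x s ≠ g t (x t) := by
    rcases eq_or_ne s t with rfl | hst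
    · exact (hx s).2.symm
    · exact fun h => hpair hst (.inr (.inl h))
  refine ⟨(⋃ i, S i) \ range fun t => g t (x t), sdiff_subset, fun i => ?_, fun t hmaps => ?_⟩
  · have removed {y : X} (hy : y ∈ S i \ ((⋃ i, S i) \ range fun t => g t (x t))) :
        ∃ t, g t (x t) = y := by
      by_contra h
      exact hy.2 ⟨mem_iUnion_of_mem i hy.1, h⟩
    intro y hy z hz
    obtain ⟨s, rfl⟩ := removed hy
    obtain ⟨t, rfl⟩ := removed hz
    rcases eq_or_ne s t with rfl | hst
    · rfl
    · exact absurd (.inr (.inr ⟨i, hy.1, hz.1⟩)) (hpair hst)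
  · exact (hmaps ⟨(hx t).1, fun ⟨s, hs⟩ => x_ne t s hs.symm⟩).2 ⟨t, rfl⟩

theorem mk_continuousMap_le {X : Type u} {Y : Type v} [TopologicalSpace X]
    [TopologicalSpace.SeparableSpace X] [Nonempty X] [TopologicalSpace Y] [T2Space Y] :
    #C(X, Y) ≤ lift.{u} (#Y ^ ℵ₀) := by
  have restrict_injective :
      Function.Injective fun (f : C(X, Y)) n => f (TopologicalSpace.denseSeq X n) :=
    fun f g h => DFunLike.coe_injective <|
      (TopologicalSpace.denseRange_denseSeq X).equalizer f.continuous g.continuous h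
  simpa using mk_le_of_injective (Equiv.ulift.{u}.symm.injective.comp restrict_injective)

theorem Erel.symm {i : ℕ} {σ τ : ℕ → Bool} (h : Erel i σ τ) : Erel i τ σ :=
  fun k hk => (h k hk).symm

theorem Erel.trans {i : ℕ} {σ τ υ : ℕ → Bool} (h : Erel i σ τ) (h' : Erel i τ υ) : Erel i σ υ :=
  fun k hk => (h k hk).trans (h' k hk)

theorem Erel.mono {i j : ℕ} {σ τ : ℕ → Bool} (hij : i ≤ j) (h : Erel j σ τ) : Erel i σ τ :=
  fun k hk => h k (hk.trans_le hij)

/-- `f` preserves and reflects all the relations `E_i` on `M`; equivalently, `f` is an isometry on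
`M` for the usual ultrametric of Cantor space. -/
def PreservesErelOn (f : (ℕ → Bool) → ℕ → Bool) (M : Set (ℕ → Bool)) : Prop :=
  ∀ σ ∈ M, ∀ τ ∈ M, ∀ i, Erel i σ τ ↔ Erel i (f σ) (f τ)

namespace PreservesErelOn

variable {f g : (ℕ → Bool) → ℕ → Bool} {M : Set (ℕ → Bool)}

theorem injOn (hf : PreservesErelOn f M) : InjOn f M := fun σ hσ τ hτ h =>
  funext fun k => (hf σ hσ τ hτ (k + 1)).2 (fun j _ => congrFun h j) k k.lt_succ_self

theorem continuous (hg : PreservesErelOn g univ) : Continuous g :=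
  continuous_pi fun k => IsLocallyConstant.continuous <|
    (IsLocallyConstant.iff_exists_open _).2 fun σ =>
      ⟨PiNat.cylinder σ (k + 1), PiNat.isOpen_cylinder _ σ (k + 1), PiNat.self_mem_cylinder σ _,
        fun τ hτ => (hg τ trivial σ trivial (k + 1)).1 hτ k k.lt_succ_self⟩

theorem exists_extension (hf : PreservesErelOn f M) (hM : ∀ σ n, ∃ τ ∈ M, Erel n τ σ) :
    ∃ g, PreservesErelOn g univ ∧ EqOn g f M := by
  choose approx approx_mem approx_erel using hM
  let g : (ℕ → Bool) → ℕ → Bool := fun σ k => f (approx σ (k + 1)) k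
  have g_erel {σ τ : ℕ → Bool} {n : ℕ} (hτ : τ ∈ M) (h : Erel n τ σ) : Erel n (g σ) (f τ) :=
    fun k hk => (hf _ (approx_mem σ _) τ hτ (k + 1)).1
      ((approx_erel σ (k + 1)).trans (h.mono hk).symm) k k.lt_succ_self
  refine ⟨g, fun σ _ τ _ i => ?_, fun σ hσ => funext fun k =>
    g_erel hσ (fun _ _ => rfl) k k.lt_succ_self⟩
  have hσ := approx_erel σ i
  have hτ := approx_erel τ i
  have hgσ := g_erel (approx_mem σ i) hσ
  have hgτ := g_erel (approx_mem τ i) hτ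
  calc Erel i σ τ
      ↔ Erel i (approx σ i) (approx τ i) :=
        ⟨fun h => (hσ.trans h).trans hτ.symm, fun h => (hσ.symm.trans h).trans hτ⟩
    _ ↔ Erel i (f (approx σ i)) (f (approx τ i)) := hf _ (approx_mem σ i) _ (approx_mem τ i) i
    _ ↔ Erel i (g σ) (g τ) :=
        ⟨fun h => (hgσ.trans h).trans hgτ.symm, fun h => (hgσ.symm.trans h).trans hgτ⟩

theorem mk_subtype_univ_le_continuum : #{g // PreservesErelOn g univ} ≤ 𝔠 :=
  calc #{g // PreservesErelOn g univ}
      ≤ #C(ℕ → Bool, ℕ → Bool) :=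
        mk_le_of_injective (f := fun g => ⟨g.1, g.2.continuous⟩) fun _ _ h =>
          Subtype.ext (congrArg DFunLike.coe h)
    _ ≤ 𝔠 := by simpa using mk_continuousMap_le (X := ℕ → Bool) (Y := ℕ → Bool)

end PreservesErelOn

theorem SsetB_subset_DsetB (η : ℕ → Bool) : SsetB η ⊆ DsetB η := by
  rintro σ (hσ | rfl)
  · exact hσ.1
  · intro n
    simp [bfun]

theorem pairwise_disjoint_SsetB : Pairwise (Function.onFun Disjoint SsetB) :=
  fun _ _ hne => disjoint_left.2 fun _ h h' => hne <| funext fun n =>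
    (SsetB_subset_DsetB _ h n).symm.trans (SsetB_subset_DsetB _ h' n)

theorem countable_SsetB (η : ℕ → Bool) : (SsetB η).Countable := by
  let oddSupport (σ : ℕ → Bool) : Set ℕ := {n | σ (2 * n + 1) ≠ false}
  have oddSupport_injOn : InjOn oddSupport (DsetB η) := fun σ hσ τ hτ h => funext fun j => by
    rcases Nat.even_or_odd' j with ⟨m, rfl | rfl⟩
    · rw [hσ m, hτ m]
    · have : σ (2 * m + 1) ≠ false ↔ τ (2 * m + 1) ≠ false := Set.ext_iff.1 h m
      simpa using this
  refine Countable.union ?_ (countable_singleton _)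
  exact MapsTo.countable_of_injOn (f := oddSupport) (t := {s : Set ℕ | s.Finite}) (fun _ hσ => hσ.2)
    (oddSupport_injOn.mono fun _ hσ => hσ.1) Countable.ofPred_finite

/-- The sequence obtained from `σ` by setting the odd coordinates from `n` on to `0`: an
approximation of a point of `D_η` by a point of `S_η`. -/
def clearOdd (n : ℕ) (σ : ℕ → Bool) : ℕ → Bool :=
  fun j => if n ≤ j ∧ Odd j then false else σ j

theorem clearOdd_of_even (n : ℕ) (σ : ℕ → Bool) {j : ℕ} (hj : Even j) :
    clearOdd n σ j = σ j :=
  if_neg fun h => Nat.not_odd_iff_even.2 hj h.2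

theorem erel_clearOdd (n : ℕ) (σ : ℕ → Bool) : Erel n (clearOdd n σ) σ :=
  fun _ hk => if_neg fun h => hk.not_ge h.1

theorem clearOdd_mem_SsetB {η σ : ℕ → Bool} (hσ : σ ∈ DsetB η) (n : ℕ) :
    clearOdd n σ ∈ SsetB η := by
  have eq_false {m : ℕ} (hm : n ≤ m) : clearOdd n σ (2 * m + 1) = false :=
    if_pos ⟨by omega, odd_two_mul_add_one m⟩
  exact .inl ⟨fun m => (clearOdd_of_even n σ (even_two_mul m)).trans (hσ m),
    (finite_lt_nat n).subset fun m hm => not_le.1 fun hnm => hm (eq_false hnm)⟩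

theorem continuum_le_mk_CsetB_erel (σ : ℕ → Bool) (n : ℕ) :
    𝔠 ≤ #{x | x ∈ CsetB ∧ Erel n x σ} := by
  let splice (η : ℕ → Bool) : ℕ → Bool := fun j => if j < n then σ j else η (j / 2 - n)
  have splice_erel (η : ℕ → Bool) : Erel n (splice η) σ := fun _ hk => if_pos hk
  let point (η : ℕ → Bool) : {x | x ∈ CsetB ∧ Erel n x σ} :=
    ⟨clearOdd n (splice η), mem_iUnion_of_mem _ (clearOdd_mem_SsetB (fun _ => rfl) n),
      (erel_clearOdd n _).trans (splice_erel η)⟩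
  have point_apply (η : ℕ → Bool) (m : ℕ) : (point η).1 (2 * (m + n)) = η m := by
    have hn : ¬ 2 * (m + n) < n := by omega
    simp [point, splice, clearOdd_of_even, hn]
  have point_injective : Function.Injective point := fun η η' h => funext fun m => by
    rw [← point_apply η m, h, point_apply]
  simpa using mk_le_of_injective point_injective

theorem PreservesErelOn.continuum_le_mk_moved {g : (ℕ → Bool) → ℕ → Bool}
    (hg : PreservesErelOn g univ) (hne : g ≠ id) : 𝔠 ≤ #{x | x ∈ CsetB ∧ g x ≠ x} := by
  obtain ⟨σ, hσ⟩ := Function.ne_iff.1 hne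
  obtain ⟨k, hk⟩ := Function.ne_iff.1 hσ
  refine (continuum_le_mk_CsetB_erel σ (k + 1)).trans <|
    mk_le_mk_of_subset fun x ⟨hxC, hx⟩ => ⟨hxC, fun hfix => hk ?_⟩
  calc g σ k = g x k := ((hg x trivial σ trivial (k + 1)).1 hx k k.lt_succ_self).symm
    _ = x k := congrFun hfix k
    _ = σ k := hx k k.lt_succ_self

section MissingAtMostOne

variable {M : Set (ℕ → Bool)}

theorem exists_mem_inter_SsetB_erel {η σ : ℕ → Bool} (hM : (SsetB η \ M).Subsingleton)
    (hσ : σ ∈ DsetB η) (n : ℕ) : ∃ τ ∈ M ∩ SsetB η, Erel n τ σ := by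
  let x (b : Bool) : ℕ → Bool := clearOdd (2 * n + 2) (Function.update σ (2 * n + 1) b)
  have x_mem (b : Bool) : x b ∈ SsetB η := clearOdd_mem_SsetB
    (fun m => (Function.update_of_ne (by omega) _ _).trans (hσ m)) _
  have x_erel (b : Bool) : Erel n (x b) σ :=
    ((erel_clearOdd (2 * n + 2) _).mono (by omega)).trans
      fun k hk => Function.update_of_ne (by omega) _ _
  have x_apply (b : Bool) : x b (2 * n + 1) = b :=
    (erel_clearOdd (2 * n + 2) _ (2 * n + 1) (by omega)).trans (Function.update_self _ _ _)
  obtain ⟨b, hb⟩ : ∃ b, x b ∈ M := by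
    by_contra! h
    have heq : x true = x false := hM ⟨x_mem true, h true⟩ ⟨x_mem false, h false⟩
    simpa only [x_apply, Bool.true_eq_false] using congrFun heq (2 * n + 1)
  exact ⟨x b, ⟨hb, x_mem b⟩, x_erel b⟩

theorem amenableB_of_diff_subsingleton (hM : ∀ η, (SsetB η \ M).Subsingleton) :
    AmenableB M := by
  rintro η n s ⟨ν, hν, hs⟩
  obtain ⟨τ, hτ, hτν⟩ := exists_mem_inter_SsetB_erel (hM η) (SsetB_subset_DsetB η hν) n
  exact ⟨τ, hτ, fun k => (hτν k k.2).trans (hs k)⟩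

end MissingAtMostOne

theorem exists_rigid_amenable_general :
    ∃ M₀ : Set (ℕ → Bool), M₀ ⊆ CsetB ∧
      (∀ η : ℕ → Bool, (SsetB η \ M₀).Subsingleton) ∧
      AmenableB M₀ ∧
      ∀ f : (ℕ → Bool) → (ℕ → Bool), MapsTo f M₀ M₀ → PreservesErelOn f M₀ →
        ∀ x ∈ M₀, f x = x := by
  let T := {g : {g // PreservesErelOn g univ} // g.1 ≠ id}
  obtain ⟨M, hMC, hM, hmaps⟩ := exists_diff_subsingleton_forall_not_mapsTo aleph0_lt_continuum
    pairwise_disjoint_SsetB countable_SsetB (T := T)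
    ((mk_subtype_le _).trans PreservesErelOn.mk_subtype_univ_le_continuum) (g := fun t => t.1.1)
    (fun t => injOn_univ.1 t.1.2.injOn) (fun t => t.1.2.continuum_le_mk_moved t.2)
  refine ⟨M, hMC, hM, amenableB_of_diff_subsingleton hM, fun f hf hE x hx => ?_⟩
  have dense (σ : ℕ → Bool) (n : ℕ) : ∃ τ ∈ M, Erel n τ σ :=
    have ⟨τ, hτ, h⟩ := exists_mem_inter_SsetB_erel (hM fun m => σ (2 * m)) (fun _ => rfl) n
    ⟨τ, hτ.1, h⟩
  obtain ⟨g, hg, hgf⟩ := hE.exists_extension dense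
  by_contra hne
  have g_ne_id : g ≠ id := fun h => hne (by rw [← hgf hx, h, id])
  exact hmaps ⟨⟨g, hg⟩, g_ne_id⟩ (hf.congr hgf.symm)

/-- There is an `M₀ ⊆ C` missing at most one point of each `S_η` (hence amenable)
that is rigid: every `E`-preserving bijection of `M₀` onto itself is the identity. -/
theorem exists_rigid_amenable :
    ∃ M₀ : Set (ℕ → Bool), M₀ ⊆ CsetB ∧
      (∀ η : ℕ → Bool, (SsetB η \ M₀).Subsingleton) ∧
      AmenableB M₀ ∧
      ∀ f : (ℕ → Bool) → (ℕ → Bool), Set.BijOn f M₀ M₀ →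
        (∀ σ ∈ M₀, ∀ τ ∈ M₀, ∀ i : ℕ, Erel i σ τ ↔ Erel i (f σ) (f τ)) →
        ∀ x ∈ M₀, f x = x := by
  obtain ⟨M₀, hC, hS, hA, hrigid⟩ := exists_rigid_amenable_general
  exact ⟨M₀, hC, hS, hA, fun f hf hE => hrigid f hf.mapsTo hE⟩
end

section
/- Let L₁ be the first-order language whose binary relation symbols are indexed by ℕ and whose unary relation symbols are indexed by the functions ℕ → Bool (and which has no other symbols), and let M₁ be the L₁-structure with universe C in which the i-th binary relation symbol is interpreted as E_i restricted to C and the η-th unary relation symbol is interpreted as S_η. Then for every elementary substructure N of M₁, the underlying set of N, viewed as a subset of C, is amenable. -/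
/-- The language `L₁` with binary relation symbols indexed by `ℕ` and unary relation
symbols indexed by `ℕ → Bool`, and no other symbols. -/
def L19 : FirstOrder.Language where
  Functions := fun _ => Empty
  Relations := fun n =>
    match n with
    | 1 => ℕ → Bool
    | 2 => ℕ
    | _ => Empty

/-- The `L₁`-structure `M₁` with universe `C`, interpreting the `i`-th binary relation
symbol as `E_i` and the `η`-th unary relation symbol as `S_η`. -/
instance M19 : L19.Structure ↥CsetB where
  funMap := fun {n} f _ => Empty.elim f
  RelMap := fun {n} =>
    match n with
    | 0 => fun r _ => Empty.elim r
    | 1 => fun (η : ℕ → Bool) x => ((x 0 : ↥CsetB) : ℕ → Bool) ∈ SsetB η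
    | 2 => fun (i : ℕ) x => Erel i ((x 0 : ↥CsetB) : ℕ → Bool) ((x 1 : ↥CsetB) : ℕ → Bool)
    | _ + 3 => fun r _ => Empty.elim r

/-!
The initial segment `σ|n` takes only finitely many values, and the fibre of `σ ↦ σ|n` through a
point `y` of `N` is definable over `N` by the formula `E_n(x, y)`. Hence the points of `S_η` whose
initial segment of length `n` is not realized in `N ∩ S_η` form a set definable over `N`. If it were
nonempty it would, by elementarity, contain a point of `N`, which is absurd.
-/

open Set FirstOrder FirstOrder.Language

section

variable {L : Language} {M : Type*} [L.Structure M] {A : Set M}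

theorem elementarySubstructure_meetsDefinable (N : L.ElementarySubstructure M) :
    L.MeetsDefinable (N : Set M) := by
  intro D ⟨a, ha⟩ hD
  obtain ⟨φ, hφ⟩ := definable_iff_exists_formula_sum.1 hD
  have mem_D (x : Fin 1 → M) : x 0 ∈ D ↔ φ.Realize (Sum.elim (↑) x) := Set.ext_iff.1 hφ x
  have exists_in_M : (φ.iExs (Fin 1)).Realize (N.subtype ∘ id) :=
    Formula.realize_iExs.2 ⟨fun _ ↦ a, (mem_D _).1 ha⟩
  obtain ⟨y, hy⟩ := Formula.realize_iExs.1 ((N.subtype.map_formula _ id).1 exists_in_M)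
  refine ⟨y 0, (mem_D (N.subtype ∘ y)).2 ?_, (y 0).2⟩
  rw [← N.subtype.map_formula, Sum.comp_elim] at hy
  exact hy

theorem image_inter_eq_image_of_meetsDefinable {α : Type*} {D : Set M} {f : M → α}
    (hA : L.MeetsDefinable A) (hD : A.Definable₁ L D) (hfin : (f '' (D ∩ A)).Finite)
    (hfib : ∀ y ∈ D ∩ A, A.Definable₁ L (f ⁻¹' {f y})) :
    f '' (D ∩ A) = f '' D := by
  refine (image_mono inter_subset_left).antisymm (image_subset_iff.2 ?_)
  have hpre : A.Definable₁ L (f ⁻¹' (f '' (D ∩ A))) := by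
    have := hfin.to_subtype
    have hUnion : A.Definable₁ L (⋃ c : f '' (D ∩ A), f ⁻¹' {(c : α)}) := by
      simp only [Definable₁, mem_iUnion, ofPred_exists]
      refine definable_iUnion_of_finite ?_
      rintro ⟨_, y, hy, rfl⟩
      exact hfib y hy
    rwa [← preimage_iUnion, iUnion_of_singleton_coe] at hUnion
  by_contra hsub
  obtain ⟨y, ⟨hyD, hy⟩, hyA⟩ := hA _ (sdiff_nonempty.2 hsub) (hD.sdiff hpre)
  exact hy ⟨y, ⟨hyD, hyA⟩, rfl⟩

theorem definable_setOf_relMap {α : Type*} {n : ℕ} (r : L.Relations n)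
    (t : Fin n → L[[A]].Term α) :
    A.Definable L {v : α → M | Structure.RelMap r fun i ↦ (t i).realize v} := by
  refine ⟨Relations.formula ((L.lhomWithConstants A).onRelation r) t, ?_⟩
  ext v
  rw [mem_ofPred_eq, mem_ofPred_eq, Formula.realize_rel, LHom.map_onRelation]

end

theorem definable₁_SsetB {A : Set CsetB} (η : ℕ → Bool) :
    A.Definable₁ L19 {x | (x : ℕ → Bool) ∈ SsetB η} :=
  definable_setOf_relMap (show L19.Relations 1 from η) fun _ ↦ .var 0

theorem definable₁_Erel {A : Set CsetB} (i : ℕ) {y : CsetB} (hy : y ∈ A) :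
    A.Definable₁ L19 {x : CsetB | Erel i x y} :=
  definable_setOf_relMap (show L19.Relations 2 from i) ![.var 0, (L19.con (⟨y, hy⟩ : A)).term]

/-- The first `n` values `σ|n` of a point `σ` of Cantor space. The relation `E_n` is the kernel
of this map, and taking values in `Fin n → Bool` makes its range visibly finite. -/
def cantorPrefix (n : ℕ) (σ : ℕ → Bool) : Fin n → Bool := fun k ↦ σ k

theorem erel_iff_cantorPrefix_eq {i : ℕ} {σ τ : ℕ → Bool} :
    Erel i σ τ ↔ cantorPrefix i σ = cantorPrefix i τ := by
  simp only [Erel, cantorPrefix, funext_iff, Fin.forall_iff]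

theorem amenableB_iff_image_cantorPrefix_subset {M : Set (ℕ → Bool)} :
    AmenableB M ↔ ∀ η n, cantorPrefix n '' SsetB η ⊆ cantorPrefix n '' (M ∩ SsetB η) := by
  simp only [AmenableB, subset_def, mem_image, cantorPrefix, funext_iff]

theorem SsetB_subset_CsetB (η : ℕ → Bool) : SsetB η ⊆ CsetB :=
  subset_iUnion SsetB η

/-- The underlying set of every elementary substructure of `M₁` is amenable. -/
theorem elementarySubstructure_amenable (N : L19.ElementarySubstructure ↥CsetB) :
    AmenableB (Subtype.val '' (N : Set ↥CsetB)) := by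
  refine amenableB_iff_image_cantorPrefix_subset.2 fun η n ↦ ?_
  let S : Set CsetB := Subtype.val ⁻¹' SsetB η
  let f : CsetB → Fin n → Bool := cantorPrefix n ∘ Subtype.val
  have same_prefixes : f '' (S ∩ N) = f '' S := by
    refine image_inter_eq_image_of_meetsDefinable (elementarySubstructure_meetsDefinable N)
      (definable₁_SsetB η) (toFinite _) fun y hy ↦ ?_
    have fibre_eq : f ⁻¹' {f y} = {x : CsetB | Erel n x y} :=
      Set.ext fun _ ↦ erel_iff_cantorPrefix_eq.symm
    exact fibre_eq ▸ definable₁_Erel n hy.2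
  have hS : Subtype.val '' S = SsetB η :=
    image_preimage_eq_of_subset (by simpa using SsetB_subset_CsetB η)
  rw [← hS, ← image_comp, ← same_prefixes, image_comp, inter_comm,
    image_inter Subtype.val_injective]
end
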